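/- Let G be a hyperbolic group, let h ∈ G be an element of infinite order, and suppose there exist a ∈ G and integers p, q such that h^q = a h^p a^{-1} in G. Then p = q or p = -q. -/

import Mathlib

/-- The word metric on a group `G` with respect to a generating set `S`:
`wordDist S g h` is the least length of a word in `S ∪ S⁻¹` representing `g⁻¹ * h`. -/
noncomputable def wordDist {G : Type*} [Group G] (S : Set G) (g h : G) : ℝ :=
  sInf {r : ℝ | ∃ l : List G, (∀ x ∈ l, x ∈ S ∨ x⁻¹ ∈ S) ∧ l.prod = g⁻¹ * h ∧ r = l.length}

/-- The Gromov product `(x|y)_w` with respect to the word metric for `S`. -/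
noncomputable def gromovProd {G : Type*} [Group G] (S : Set G) (w x y : G) : ℝ :=
  (wordDist S x w + wordDist S y w - wordDist S x y) / 2

/-- A group is (Gromov) hyperbolic if it admits a finite generating set `S` such that
the word metric `d_S` satisfies the Gromov product four-point condition for some `δ ≥ 0`. -/
def IsHyperbolicGroup (G : Type*) [Group G] : Prop :=
  ∃ S : Set G, S.Finite ∧ Subgroup.closure S = ⊤ ∧
    ∃ δ : ℝ, 0 ≤ δ ∧ ∀ w x y z : G,
      gromovProd S w x y ≥ min (gromovProd S w x z) (gromovProd S w y z) - δ

/-!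
Let `τ(g) = lim d(x, gⁿx)/n` be the translation length. It does not depend on `x`, it is invariant
under conjugation, and `τ(gᵏ) = |k| τ(g)`. Hence `h ^ q = a * h ^ p * a⁻¹` gives
`|q| τ(h) = |p| τ(h)`, and everything comes down to `τ(h) > 0` for `h` of infinite order.

In a `δ`-hyperbolic space `d(x, g²x) ≤ d(x, gx) + τ(g) + 2δ`. Consequently, an isometry `g` that
moves the endpoints of a long geodesic only slightly moves the points deep inside it by at most
`τ(g) + 10δ`. Suppose `τ(h) = 0`. Since `h` commutes with `hⁿ`, each of `1, h, …, hᴺ` moves `1` and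
`hⁿ` equally little, so for `n` large they all move some point `m` between `1` and `hⁿ` by at most
`10δ`. Thus the conjugates `m⁻¹ hⁱ m` are `N + 1` distinct elements of a ball of radius `10δ`, which
is absurd once `N` exceeds the cardinality of that ball.
-/

open Filter Topology

section TranslationLength

variable {G X : Type*} [Group G] [PseudoMetricSpace X] [MulAction G X] [IsIsometricSMul G X]

theorem dist_inv_smul_right (g : G) (x y : X) : dist x (g⁻¹ • y) = dist (g • x) y := by
  rw [← dist_smul g, smul_inv_smul]

theorem subadditive_dist_pow_smul (g : G) (x : X) :
    Subadditive fun n : ℕ => dist x (g ^ n • x) := fun m n =>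
  calc dist x (g ^ (m + n) • x)
      ≤ dist x (g ^ m • x) + dist (g ^ m • x) (g ^ (m + n) • x) := dist_triangle _ _ _
    _ = dist x (g ^ m • x) + dist x (g ^ n • x) := by rw [pow_add, mul_smul, dist_smul]

/-- The (stable) translation length `lim d(x, gⁿx)/n` of an isometry `g`. The base point `x` is an
explicit argument so that no choice of a point is needed; the value does not depend on it, see
`translationLength_eq_of_basepoint`. -/
noncomputable def translationLength (g : G) (x : X) : ℝ :=
  (subadditive_dist_pow_smul g x).lim

theorem tendsto_dist_pow_smul_div (g : G) (x : X) :
    Tendsto (fun n : ℕ => dist x (g ^ n • x) / n) atTop (𝓝 (translationLength g x)) := by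
  refine (subadditive_dist_pow_smul g x).tendsto_lim ⟨0, ?_⟩
  rintro _ ⟨n, rfl⟩
  positivity

theorem translationLength_nonneg (g : G) (x : X) : 0 ≤ translationLength g x :=
  ge_of_tendsto' (tendsto_dist_pow_smul_div g x) fun _ => by positivity

theorem le_translationLength {g : G} {x : X} {ε : ℝ}
    (hε : ∀ n : ℕ, n * ε ≤ dist x (g ^ n • x)) : ε ≤ translationLength g x := by
  refine ge_of_tendsto (tendsto_dist_pow_smul_div g x) ?_
  filter_upwards [eventually_gt_atTop 0] with n hn
  rw [le_div_iff₀' (by exact_mod_cast hn)]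
  exact hε n

theorem abs_dist_smul_sub_dist_smul_le (g : G) (x y : X) :
    |dist x (g • x) - dist y (g • y)| ≤ 2 * dist x y :=
  calc |dist x (g • x) - dist y (g • y)|
      ≤ dist x y + dist (g • x) (g • y) := dist_dist_dist_le x (g • x) y (g • y)
    _ = 2 * dist x y := by rw [dist_smul, two_mul]

theorem translationLength_eq_of_basepoint (g : G) (x y : X) :
    translationLength g x = translationLength g y := by
  have hsub := (tendsto_dist_pow_smul_div g x).sub (tendsto_dist_pow_smul_div g y)
  have hzero : Tendsto (fun n : ℕ => dist x (g ^ n • x) / n - dist y (g ^ n • y) / n)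
      atTop (𝓝 0) := by
    refine squeeze_zero_norm (fun n => ?_) (tendsto_const_div_atTop_nhds_zero_nat (2 * dist x y))
    rw [← sub_div, norm_div, Real.norm_eq_abs, Real.norm_natCast]
    gcongr
    exact abs_dist_smul_sub_dist_smul_le _ x y
  exact sub_eq_zero.mp (tendsto_nhds_unique hsub hzero)

theorem translationLength_conj (a g : G) (x : X) :
    translationLength (a * g * a⁻¹) x = translationLength g x := by
  rw [translationLength_eq_of_basepoint g x (a⁻¹ • x)]
  refine tendsto_nhds_unique (tendsto_dist_pow_smul_div _ x) ?_
  refine (tendsto_dist_pow_smul_div g (a⁻¹ • x)).congr fun n => ?_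
  rw [conj_pow, ← dist_smul a, smul_inv_smul, smul_smul, smul_smul, mul_assoc]

theorem translationLength_inv (g : G) (x : X) :
    translationLength g⁻¹ x = translationLength g x := by
  refine tendsto_nhds_unique (tendsto_dist_pow_smul_div g⁻¹ x) ?_
  refine (tendsto_dist_pow_smul_div g x).congr fun n => ?_
  rw [inv_pow, dist_inv_smul_right, dist_comm]

theorem translationLength_pow (g : G) (k : ℕ) (x : X) :
    translationLength (g ^ k) x = k * translationLength g x := by
  rcases Nat.eq_zero_or_pos k with rfl | hk
  · refine tendsto_nhds_unique (tendsto_dist_pow_smul_div (g ^ 0) x) ?_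
    simp
  · have hmul : Tendsto (fun n : ℕ => k * n) atTop atTop := tendsto_id.const_mul_atTop' hk
    have hlim := ((tendsto_dist_pow_smul_div g x).comp hmul).const_mul (k : ℝ)
    refine tendsto_nhds_unique (tendsto_dist_pow_smul_div (g ^ k) x) (hlim.congr fun n => ?_)
    rw [Function.comp_apply, ← pow_mul, Nat.cast_mul, ← mul_div_assoc,
      mul_div_mul_left _ _ (by positivity)]

theorem translationLength_zpow (g : G) (k : ℤ) (x : X) :
    translationLength (g ^ k) x = |(k : ℝ)| * translationLength g x := by
  obtain ⟨n, rfl | rfl⟩ := k.eq_nat_or_neg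
  · simp [translationLength_pow]
  · simp [translationLength_inv, translationLength_pow]

end TranslationLength

/-- Gromov's four-point condition: of the three ways to split four points into two pairs, the two
largest sums of distances differ by at most `2δ`. The factor `2` makes `δ` the same constant as in
the definition by Gromov products. -/
def IsGromovHyperbolic (X : Type*) [PseudoMetricSpace X] (δ : ℝ) : Prop :=
  ∀ x y z w : X, dist x y + dist z w ≤ max (dist x z + dist y w) (dist x w + dist y z) + 2 * δ

namespace IsGromovHyperbolic

section FourPoints

variable {X : Type*} [PseudoMetricSpace X] {δ : ℝ}

theorem nonneg (hX : IsGromovHyperbolic X δ) (x : X) : 0 ≤ δ := by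
  simpa using hX x x x x

theorem dist_le_max_of_between (hX : IsGromovHyperbolic X δ) {x y m : X}
    (hm : dist x m + dist m y = dist x y) (z : X) :
    dist m z ≤ max (dist x z - dist x m) (dist z y - dist m y) + 2 * δ := by
  have hfour := hX m z x y
  rw [dist_comm m x, dist_comm z x] at hfour
  rcases max_cases (dist x m + dist z y) (dist m y + dist x z) with h | h
  · linarith [le_max_right (dist x z - dist x m) (dist z y - dist m y)]
  · linarith [le_max_left (dist x z - dist x m) (dist z y - dist m y)]

-- In a quadrilateral with two short opposite sides, points away from the ends of one long side are
-- almost between the ends of the other.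
theorem dist_add_dist_le_of_between (hX : IsGromovHyperbolic X δ) {x y x' y' m : X} {L : ℝ}
    (hx : dist x x' ≤ L) (hy : dist y y' ≤ L) (hm : dist x' m + dist m y' = dist x' y')
    (hmx : 2 * L ≤ dist x' m) (hmy : 2 * L ≤ dist m y') :
    dist x m + dist m y ≤ dist x y + 4 * δ := by
  have hL : 0 ≤ L := dist_nonneg.trans hx
  have hxy : dist x' y' ≤ L + dist x y + L := by
    linarith [dist_triangle4 x' x y y', dist_comm x' x]
  have hx'y : dist x' y' ≤ dist x' y + L := by linarith [dist_triangle x' y y']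
  have hmy' : dist m y ≤ dist m y' + L := by linarith [dist_triangle m y' y, dist_comm y y']
  have hfour : dist x m + dist x' y ≤ dist x' m + dist x y + 2 * δ := by
    have := hX m x x' y
    rw [max_eq_left (by linarith [dist_comm m x']), dist_comm m x, dist_comm m x'] at this
    exact this
  have hfour' : dist m y + dist x' y' ≤ dist m y' + dist x' y + 2 * δ := by
    have := hX m y x' y'
    rw [max_eq_right (by linarith [dist_comm m x', dist_comm y x']), dist_comm y x'] at this
    exact this
  linarith

end FourPoints

section Isometries

variable {G X : Type*} [Group G] [PseudoMetricSpace X] [MulAction G X] [IsIsometricSMul G X]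
  {δ : ℝ}

theorem dist_pow_smul_add_le (hX : IsGromovHyperbolic X δ) {g : G} {x : X} {ε : ℝ} (hε : 0 < ε)
    (hg : dist x (g • x) + 2 * δ + ε ≤ dist x (g ^ 2 • x)) (n : ℕ) :
    dist x (g ^ n • x) + ε ≤ dist x (g ^ (n + 1) • x) := by
  have hsq : dist x (g ^ 2 • x) ≤ dist x (g • x) + dist x (g • x) := by
    simpa using subadditive_dist_pow_smul g x 1 1
  induction n with
  | zero =>
    simp only [pow_zero, one_smul, dist_self, zero_add, pow_one]
    linarith [hX.nonneg x]
  | succ n ih =>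
    have hfour := hX x (g ^ 2 • x) (g • x) (g ^ (n + 2) • x)
    have hshift : dist (g • x) (g ^ (n + 2) • x) = dist x (g ^ (n + 1) • x) := by
      rw [pow_succ' g (n + 1), mul_smul, dist_smul]
    have hshift_two : dist (g ^ 2 • x) (g ^ (n + 2) • x) = dist x (g ^ n • x) := by
      rw [add_comm, pow_add, mul_smul, dist_smul]
    have hstep : dist (g ^ 2 • x) (g • x) = dist x (g • x) := by
      rw [dist_comm, pow_two, mul_smul, dist_smul]
    rw [hshift, hshift_two, hstep] at hfour
    rcases le_max_iff.mp (sub_le_iff_le_add.mpr hfour) with h | h <;> linarith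

theorem dist_sq_smul_le (hX : IsGromovHyperbolic X δ) (g : G) (x : X) :
    dist x (g ^ 2 • x) ≤ dist x (g • x) + translationLength g x + 2 * δ := by
  by_contra! hlt
  set ε := dist x (g ^ 2 • x) - dist x (g • x) - 2 * δ
  have hε_pos : 0 < ε := by linarith [translationLength_nonneg g x]
  have hlinear (n : ℕ) : n * ε ≤ dist x (g ^ n • x) := by
    induction n with
    | zero => simp
    | succ n ih =>
      have := hX.dist_pow_smul_add_le hε_pos (by linarith) n
      push_cast
      linarith
  linarith [le_translationLength hlinear]

-- `g • m` and `g⁻¹ • m` cannot both lie beyond `m` as seen from `x`.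
theorem dist_smul_le_of_far_of_far (hX : IsGromovHyperbolic X δ) {g : G} {x m : X}
    (hx : dist x (g • x) ≤ 2 * dist x m)
    (hfar : dist x m + dist m (g • m) ≤ dist x (g • m) + 2 * δ)
    (hfar_inv : dist x m + dist m (g • m) ≤ dist x (g⁻¹ • m) + 2 * δ) :
    dist m (g • m) ≤ 6 * δ := by
  have hfour := hX x (g • m) (g • x) m
  rw [dist_smul, dist_comm (g • m) m, dist_comm m x, ← dist_inv_smul_right] at hfour
  have hδ := hX.nonneg x
  rcases le_max_iff.mp (sub_le_iff_le_add.mpr hfour) with h | h <;> linarith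

theorem dist_smul_add_dist_smul_le (hX : IsGromovHyperbolic X δ) {g : G} {x y m : X} {L : ℝ}
    (hx : dist x (g • x) ≤ L) (hy : dist y (g • y) ≤ L)
    (hm : dist x m + dist m y = dist x y) (hmx : 2 * L ≤ dist x m) (hmy : 2 * L ≤ dist m y) :
    dist x (g • m) + dist (g • m) y ≤ dist x y + 4 * δ := by
  rw [← dist_smul g x m] at hm hmx
  rw [← dist_smul g m y] at hm hmy
  rw [← dist_smul g x y] at hm
  exact hX.dist_add_dist_le_of_between hx hy hm hmx hmy

-- `g • m` and `g⁻¹ • m` are almost between `x` and `y`, on different sides of `m`, so they are at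
-- distance about `2 * dist m (g • m)`, which is compared with `dist_sq_smul_le`.
theorem dist_smul_le_translationLength_add (hX : IsGromovHyperbolic X δ) {g : G} {x y m : X}
    {L : ℝ} (hx : dist x (g • x) ≤ L) (hy : dist y (g • y) ≤ L)
    (hm : dist x m + dist m y = dist x y) (hmx : 2 * L ≤ dist x m) (hmy : 2 * L ≤ dist m y) :
    dist m (g • m) ≤ translationLength g m + 10 * δ := by
  have hinv (z : X) : dist z (g⁻¹ • z) = dist z (g • z) := by
    rw [dist_inv_smul_right, dist_comm]
  have hbetween := hX.dist_smul_add_dist_smul_le hx hy hm hmx hmy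
  have hbetween_inv := hX.dist_smul_add_dist_smul_le (g := g⁻¹) (by rwa [hinv]) (by rwa [hinv])
    hm hmx hmy
  have hfar := hX.dist_le_max_of_between hm (g • m)
  have hfar_inv := hX.dist_le_max_of_between hm (g⁻¹ • m)
  have hspread : dist (g⁻¹ • m) (g • m) ≤ dist m (g • m) + translationLength g m + 2 * δ := by
    rw [dist_comm, dist_inv_smul_right, dist_comm, smul_smul, ← pow_two]
    exact hX.dist_sq_smul_le g m
  rw [hinv] at hfar_inv
  rw [← sub_le_iff_le_add, le_max_iff] at hfar hfar_inv
  have hL : 0 ≤ L := dist_nonneg.trans hx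
  have hδ := hX.nonneg x
  have hτ := translationLength_nonneg g m
  rcases hfar with hfar | hfar <;> rcases hfar_inv with hfar_inv | hfar_inv
  · linarith [hX.dist_smul_le_of_far_of_far (g := g) (x := x) (m := m) (by linarith)
      (by linarith) (by linarith)]
  · linarith [dist_triangle x (g⁻¹ • m) (g • m)]
  · linarith [dist_triangle x (g • m) (g⁻¹ • m), dist_comm (g • m) (g⁻¹ • m)]
  · rw [dist_comm m y, dist_comm _ y] at hfar hfar_inv
    linarith [hX.dist_smul_le_of_far_of_far (g := g) (x := y) (m := m)
      (by linarith [dist_comm m y]) (by linarith) (by linarith)]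

end Isometries

end IsGromovHyperbolic

/-- Spaces with geodesics through points at integer distances, such as the vertex set of a connected
graph: between `x` and `y` there is a point at each integer distance `k ≤ d(x, y)` from `x`. -/
def IsDiscretelyGeodesic (X : Type*) [PseudoMetricSpace X] : Prop :=
  ∀ (x y : X) (k : ℕ), k ≤ dist x y → ∃ m, dist x m = k ∧ dist x m + dist m y = dist x y

theorem IsDiscretelyGeodesic.exists_between_far {X : Type*} [PseudoMetricSpace X]
    (hX : IsDiscretelyGeodesic X) {x y : X} {R : ℝ} (hR : 0 ≤ R) (hxy : 2 * R + 1 ≤ dist x y) :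
    ∃ m, dist x m + dist m y = dist x y ∧ R ≤ dist x m ∧ R ≤ dist m y := by
  have hceil : (⌈R⌉₊ : ℝ) < R + 1 := Nat.ceil_lt_add_one hR
  obtain ⟨m, hxm, hm⟩ := hX x y ⌈R⌉₊ (by linarith)
  exact ⟨m, hm, hxm ▸ Nat.le_ceil R, by linarith⟩

section LeftInvariantMetric

variable {G : Type*} [Group G] [PseudoMetricSpace G]

theorem exists_le_dist_pow {h : G} (hh : ¬IsOfFinOrder h)
    (hfin : ∀ R : ℝ, (Metric.closedBall (1 : G) R).Finite) (R : ℝ) :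
    ∃ n : ℕ, R ≤ dist 1 (h ^ n) := by
  by_contra! hlt
  refine Set.infinite_range_of_injective (injective_pow_iff_not_isOfFinOrder.mpr hh)
    ((hfin R).subset ?_)
  rintro _ ⟨n, rfl⟩
  exact Metric.mem_closedBall'.mpr (hlt n).le

variable [IsIsometricSMul G G]

theorem exists_forall_lt_dist_pow_smul_le {δ : ℝ} (hG : IsGromovHyperbolic G δ)
    (hgeod : IsDiscretelyGeodesic G) (hfin : ∀ R : ℝ, (Metric.closedBall (1 : G) R).Finite)
    {h : G} (hh : ¬IsOfFinOrder h) (N : ℕ) :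
    ∃ m : G, ∀ i < N, dist m (h ^ i • m) ≤ i * translationLength h m + 10 * δ := by
  obtain ⟨L, hL⟩ := ((Set.finite_lt_nat N).image fun i => dist 1 (h ^ i)).bddAbove
  replace hL : ∀ i < N, dist 1 (h ^ i) ≤ max L 0 := fun i hi =>
    (hL ⟨i, hi, rfl⟩).trans (le_max_left L 0)
  obtain ⟨n, hn⟩ := exists_le_dist_pow hh hfin (2 * (2 * max L 0) + 1)
  obtain ⟨m, hm, hm_left, hm_right⟩ := hgeod.exists_between_far (by positivity) hn
  refine ⟨m, fun i hi => ?_⟩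
  have hleft : dist 1 (h ^ i • (1 : G)) ≤ max L 0 := by simpa using hL i hi
  have hright : dist (h ^ n) (h ^ i • h ^ n) ≤ max L 0 := by
    rw [smul_eq_mul, pow_mul_comm, ← smul_eq_mul]
    simpa using (dist_smul (h ^ n) 1 (h ^ i)).trans_le (hL i hi)
  rw [← translationLength_pow]
  exact hG.dist_smul_le_translationLength_add hleft hright hm hm_left hm_right

theorem translationLength_pos {δ : ℝ} (hG : IsGromovHyperbolic G δ)
    (hgeod : IsDiscretelyGeodesic G) (hfin : ∀ R : ℝ, (Metric.closedBall (1 : G) R).Finite)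
    {h : G} (hh : ¬IsOfFinOrder h) (x : G) : 0 < translationLength h x := by
  refine (translationLength_nonneg h x).lt_of_ne' fun hzero => ?_
  set B := (hfin (10 * δ)).toFinset with hB
  obtain ⟨m, hm⟩ := exists_forall_lt_dist_pow_smul_le hG hgeod hfin hh (B.card + 1)
  rw [translationLength_eq_of_basepoint h m x, hzero] at hm
  have hmaps : ∀ i ∈ Finset.range (B.card + 1), m⁻¹ * h ^ i * m ∈ B := by
    intro i hi
    rw [hB, Set.Finite.mem_toFinset, Metric.mem_closedBall', ← dist_smul m]
    simpa [mul_assoc] using hm i (Finset.mem_range.mp hi)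
  obtain ⟨i, -, j, -, hij, heq⟩ := Finset.exists_ne_map_eq_of_card_lt_of_maps_to (by simp) hmaps
  exact hij (injective_pow_iff_not_isOfFinOrder.mpr hh (by simpa using heq))

end LeftInvariantMetric

section WordMetric

variable {G : Type*} [Group G] {S : Set G}

theorem wordDist_le_length {x y : G} {l : List G} (hl : ∀ z ∈ l, z ∈ S ∨ z⁻¹ ∈ S)
    (hprod : l.prod = x⁻¹ * y) : wordDist S x y ≤ l.length :=
  csInf_le ⟨0, by rintro _ ⟨l, -, -, rfl⟩; positivity⟩ ⟨l, hl, hprod, rfl⟩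

theorem exists_word_of_closure_eq_top (hS : Subgroup.closure S = ⊤) (g : G) :
    ∃ l : List G, (∀ z ∈ l, z ∈ S ∨ z⁻¹ ∈ S) ∧ l.prod = g := by
  have hg : g ∈ (Subgroup.closure S).toSubmonoid := by simp [hS]
  rw [Subgroup.closure_toSubmonoid] at hg
  exact Submonoid.exists_list_of_mem_closure hg

theorem exists_word_length_eq_wordDist (hS : Subgroup.closure S = ⊤) (x y : G) :
    ∃ l : List G, (∀ z ∈ l, z ∈ S ∨ z⁻¹ ∈ S) ∧ l.prod = x⁻¹ * y ∧ l.length = wordDist S x y := by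
  obtain ⟨l, ⟨hl, hprod⟩, hmin⟩ := exists_minimalFor_of_wellFoundedLT
    (fun l : List G => (∀ z ∈ l, z ∈ S ∨ z⁻¹ ∈ S) ∧ l.prod = x⁻¹ * y) List.length
    (exists_word_of_closure_eq_top hS _)
  refine ⟨l, hl, hprod, le_antisymm ?_ (wordDist_le_length hl hprod)⟩
  refine le_csInf ⟨_, l, hl, hprod, rfl⟩ ?_
  rintro _ ⟨l', hl', hprod', rfl⟩
  exact_mod_cast (le_total l.length l'.length).elim id (hmin ⟨hl', hprod'⟩)

theorem wordDist_triangle (hS : Subgroup.closure S = ⊤) (x y z : G) :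
    wordDist S x z ≤ wordDist S x y + wordDist S y z := by
  obtain ⟨l, hl, hprod, hlen⟩ := exists_word_length_eq_wordDist hS x y
  obtain ⟨l', hl', hprod', hlen'⟩ := exists_word_length_eq_wordDist hS y z
  have hle : wordDist S x z ≤ (l ++ l').length :=
    wordDist_le_length (List.forall_mem_append.mpr ⟨hl, hl'⟩)
      (by rw [List.prod_append, hprod, hprod']; group)
  rwa [List.length_append, Nat.cast_add, hlen, hlen'] at hle

theorem wordDist_le_wordDist_swap (hS : Subgroup.closure S = ⊤) (x y : G) :
    wordDist S y x ≤ wordDist S x y := by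
  obtain ⟨l, hl, hprod, hlen⟩ := exists_word_length_eq_wordDist hS x y
  have hle : wordDist S y x ≤ (l.map (·⁻¹)).reverse.length :=
    wordDist_le_length
      (by simpa only [List.mem_reverse, List.forall_mem_map, inv_inv, or_comm] using hl)
      (by rw [← List.prod_inv_reverse, hprod]; group)
  rwa [List.length_reverse, List.length_map, hlen] at hle

theorem wordDist_self (x : G) : wordDist S x x = 0 := by
  refine le_antisymm ?_ (Real.sInf_nonneg ?_)
  · simpa using wordDist_le_length (S := S) (x := x) (y := x) (l := []) (by simp) (by simp)
  · rintro _ ⟨l, -, -, rfl⟩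
    positivity

theorem eq_of_wordDist_eq_zero (hS : Subgroup.closure S = ⊤) {x y : G}
    (hxy : wordDist S x y = 0) : x = y := by
  obtain ⟨l, -, hprod, hlen⟩ := exists_word_length_eq_wordDist hS x y
  obtain rfl : l = [] := by simpa [hxy] using hlen
  exact inv_mul_eq_one.mp hprod.symm

/-- The word metric of a generating set, as a metric space structure on the group. It is not an
instance, since it depends on the generating set. -/
noncomputable abbrev wordMetricSpace (hS : Subgroup.closure S = ⊤) : MetricSpace G where
  dist := wordDist S
  dist_self := wordDist_self
  dist_comm x y := le_antisymm (wordDist_le_wordDist_swap hS y x) (wordDist_le_wordDist_swap hS x y)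
  dist_triangle := wordDist_triangle hS
  eq_of_dist_eq_zero := eq_of_wordDist_eq_zero hS

theorem wordDist_mul_left (S : Set G) (g x y : G) :
    wordDist S (g * x) (g * y) = wordDist S x y := by
  rw [wordDist, wordDist, mul_inv_rev, mul_assoc, inv_mul_cancel_left]

theorem isIsometricSMul_wordMetricSpace (hS : Subgroup.closure S = ⊤) :
    letI := wordMetricSpace hS
    IsIsometricSMul G G :=
  let := wordMetricSpace hS
  ⟨fun g => Isometry.of_dist_eq (wordDist_mul_left S g)⟩

theorem isDiscretelyGeodesic_wordMetricSpace (hS : Subgroup.closure S = ⊤) :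
    letI := wordMetricSpace hS
    IsDiscretelyGeodesic G := by
  let := wordMetricSpace hS
  intro x y k hk
  obtain ⟨l, hl, hprod, hlen⟩ := exists_word_length_eq_wordDist hS x y
  replace hk : k ≤ l.length := by
    rw [← Nat.cast_le (α := ℝ), hlen]
    exact hk
  have hsplit : (l.take k).prod * (l.drop k).prod = x⁻¹ * y := by
    rw [List.prod_take_mul_prod_drop, hprod]
  have hleft : dist x (x * (l.take k).prod) ≤ k := by
    have := wordDist_le_length (S := S) (x := x) (y := x * (l.take k).prod) (l := l.take k)
      (fun z hz => hl z (List.mem_of_mem_take hz)) (by group)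
    rwa [List.length_take_of_le hk] at this
  have hright : dist (x * (l.take k).prod) y ≤ dist x y - k := by
    have := wordDist_le_length (S := S) (x := x * (l.take k).prod) (y := y) (l := l.drop k)
      (fun z hz => hl z (List.mem_of_mem_drop hz))
      (by rw [mul_inv_rev, mul_assoc, ← hsplit, inv_mul_cancel_left])
    rwa [List.length_drop, Nat.cast_sub hk, hlen] at this
  have htriangle := dist_triangle x (x * (l.take k).prod) y
  exact ⟨x * (l.take k).prod, by linarith, by linarith⟩

theorem finite_closedBall_wordMetricSpace (hS : Subgroup.closure S = ⊤) (hfin : S.Finite)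
    (R : ℝ) :
    letI := wordMetricSpace hS
    (Metric.closedBall (1 : G) R).Finite := by
  let := wordMetricSpace hS
  have : Finite ↥(S ∪ S⁻¹) := (hfin.union hfin.inv).to_subtype
  refine ((List.finite_length_le ↥(S ∪ S⁻¹) ⌊R⌋₊).image
    fun l => (l.map Subtype.val).prod).subset fun g hg => ?_
  obtain ⟨l, hl, hprod, hlen⟩ := exists_word_length_eq_wordDist hS 1 g
  have hlen_le : (l.length : ℝ) ≤ R := hlen.trans_le (Metric.mem_closedBall'.mp hg)
  replace hl : ∀ z ∈ l, z ∈ S ∪ S⁻¹ := hl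
  lift l to List ↥(S ∪ S⁻¹) using hl
  exact ⟨l, by simpa using Nat.le_floor hlen_le, by simpa using hprod⟩

theorem isGromovHyperbolic_wordMetricSpace (hS : Subgroup.closure S = ⊤) {δ : ℝ}
    (hδ : ∀ w x y z : G,
      gromovProd S w x y ≥ min (gromovProd S w x z) (gromovProd S w y z) - δ) :
    letI := wordMetricSpace hS
    IsGromovHyperbolic G δ := by
  let := wordMetricSpace hS
  intro x y z w
  have hmin : min ((dist x w + dist z w - dist x z) / 2) ((dist y w + dist z w - dist y z) / 2) ≤
      (dist x w + dist y w - dist x y) / 2 + δ := sub_le_iff_le_add.mp (hδ w x y z)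
  rcases min_le_iff.mp hmin with h | h
  · linarith [le_max_left (dist x z + dist y w) (dist x w + dist y z)]
  · linarith [le_max_right (dist x z + dist y w) (dist x w + dist y z)]

end WordMetric

/-- In a hyperbolic group, if `h` has infinite order and `h^q = a h^p a⁻¹`,
then `p = q` or `p = -q`. -/
theorem stmt_0 {G : Type*} [Group G] (hG : IsHyperbolicGroup G)
    (h : G) (hord : ∀ n : ℤ, n ≠ 0 → h ^ n ≠ 1)
    (a : G) (p q : ℤ) (hconj : h ^ q = a * h ^ p * a⁻¹) :
    p = q ∨ p = -q := by
  obtain ⟨S, hfin, hS, δ, -, hδ⟩ := hG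
  let := wordMetricSpace hS
  have := isIsometricSMul_wordMetricSpace hS
  have hh : ¬IsOfFinOrder h := by
    rw [isOfFinOrder_iff_zpow_eq_one]
    rintro ⟨n, hn, hpow⟩
    exact hord n hn hpow
  have hpos : 0 < translationLength h (1 : G) :=
    translationLength_pos (isGromovHyperbolic_wordMetricSpace hS hδ)
      (isDiscretelyGeodesic_wordMetricSpace hS) (finite_closedBall_wordMetricSpace hS hfin) hh 1
  have hlength :
      |(p : ℝ)| * translationLength h (1 : G) = |(q : ℝ)| * translationLength h (1 : G) := by
    rw [← translationLength_zpow, ← translationLength_zpow, hconj, translationLength_conj]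
  have habs : |(p : ℝ)| = |(q : ℝ)| := mul_right_cancel₀ hpos.ne' hlength
  exact_mod_cast abs_eq_abs.mp habs
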